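/- arXiv:1210.3525 — 2 statements merged into one kernel-verified Lean document; each statement's English description precedes it below -/
import Mathlib

section
/- Let Y be a finite set with at least three elements. If 𝒫 is a compatible collection of 3-partitions of Y, then |𝒫| ≤ |Y| − 2. -/
open MeasureTheory

/-- Vertices of the hexagonal lattice: `(x, y, t)` with `t = true` the "upper" vertex. -/
abbrev HexV : Type := ℤ × ℤ × Bool

/-- Edges of the hexagonal lattice: `(x, y, k)` with `k = 0` the a-type (horizontal) edge
joining `(x,y,1)` to `(x,y,0)`, `k = 1` the b-type edge joining `(x,y,1)` to `(x+1,y,0)`,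
`k = 2` the c-type edge joining `(x,y,1)` to `(x,y+1,0)`. -/
abbrev HexE : Type := ℤ × ℤ × Fin 3

/-- A configuration assigns present/absent to each edge. -/
abbrev Config : Type := HexE → Bool

def end1 (e : HexE) : HexV := (e.1, e.2.1, true)

def end2 (e : HexE) : HexV :=
  if e.2.2 = 0 then (e.1, e.2.1, false)
  else if e.2.2 = 1 then (e.1 + 1, e.2.1, false)
  else (e.1, e.2.1 + 1, false)

/-- The edges incident to a vertex, indexed so that index `0` is the a-type (horizontal)
edge, index `1` the b-type edge, index `2` the c-type edge. -/
def edgesAt (v : HexV) : Fin 3 → HexE := fun i =>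
  if v.2.2 then (v.1, v.2.1, i)
  else if i = 0 then (v.1, v.2.1, 0)
  else if i = 1 then (v.1 - 1, v.2.1, 1)
  else (v.1, v.2.1 - 1, 2)

/-- Local configuration of `ω` at `v`: digit `0` (rightmost) is the a-type edge,
digit `1` the b-type edge, digit `2` (leftmost) the c-type edge. -/
def localConf (ω : Config) (v : HexV) : Fin 3 → Bool := fun i => ω (edgesAt v i)

/-- A 1-2 model configuration: every vertex is incident to one or two present edges. -/
def IsConfig (ω : Config) : Prop :=
  ∀ v : HexV,
    1 ≤ (Finset.univ.filter fun i : Fin 3 => localConf ω v i = true).card ∧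
    (Finset.univ.filter fun i : Fin 3 => localConf ω v i = true).card ≤ 2

/-- The local configuration type `{001}` : only the a-type (horizontal) edge is present. -/
def conf001 : Fin 3 → Bool := ![true, false, false]

/-- The six admissible local configuration types `{001},…,{110}`. -/
def validConf (τ : Fin 3 → Bool) : Prop :=
  τ ≠ ![false, false, false] ∧ τ ≠ ![true, true, true]

/-- Vertex weight: `w(001)=w(110)=a`, `w(010)=w(101)=b`, `w(011)=w(100)=c`. -/
def weight (a b c : ℝ) (f : Fin 3 → Bool) : ℝ :=
  match f 2, f 1, f 0 with
  | false, false, true  => a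
  | true,  true,  false => a
  | false, true,  false => b
  | true,  false, true  => b
  | false, true,  true  => c
  | true,  false, false => c
  | false, false, false => 0
  | true,  true,  true  => 0

/-- Adjacency in the hexagonal lattice. -/
def HexAdj (v w : HexV) : Prop :=
  v ≠ w ∧ ∃ e : HexE, (v = end1 e ∨ v = end2 e) ∧ (w = end1 e ∨ w = end2 e)

/-- Adjacency restricted to a vertex set `S`. -/
def adjIn (S : Set HexV) (v w : HexV) : Prop := HexAdj v w ∧ v ∈ S ∧ w ∈ S

/-- The connected component of `v` in the subgraph induced on `S`. -/
def compOf (S : Set HexV) (v : HexV) : Set HexV := {w | Relation.ReflTransGen (adjIn S) v w}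

/-- `C` is a connected component of the subgraph induced on `S`. -/
def IsCompOf (S : Set HexV) (C : Set HexV) : Prop := ∃ v ∈ S, C = compOf S v

/-- Vertices whose local configuration equals `τ`. -/
def confSet (ω : Config) (τ : Fin 3 → Bool) : Set HexV := {v | localConf ω v = τ}

/-- A `τ`-cluster of `ω`. -/
def IsCluster (ω : Config) (τ : Fin 3 → Bool) (C : Set HexV) : Prop :=
  IsCompOf (confSet ω τ) C

/-- The number of infinite `τ`-clusters of `ω`, as an extended natural number. -/
noncomputable def numInfClusters (ω : Config) (τ : Fin 3 → Bool) : ℕ∞ :=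
  {C : Set HexV | IsCluster ω τ C ∧ C.Infinite}.encard

def endsFinset (e : HexE) : Finset HexV := {end1 e, end2 e}

/-- Vertices incident to an edge of `F`. -/
def verts (F : Finset HexE) : Finset HexV := F.biUnion endsFinset

/-- Edges sharing an endpoint with an edge of `F`. -/
def edgeNbhd (F : Finset HexE) : Set HexE :=
  {e' | ∃ e ∈ F,
    end1 e = end1 e' ∨ end1 e = end2 e' ∨ end2 e = end1 e' ∨ end2 e = end2 e'}

/-- Cylinder event: configurations agreeing with `σ` on `S`. -/
def cyl (S : Set HexE) (σ : Config) : Set Config := {ω | ∀ e ∈ S, ω e = σ e}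

/-- A Gibbs measure for the 1-2 model with weights `a`, `b`, `c`. -/
def IsGibbs (a b c : ℝ) (μ : Measure Config) : Prop :=
  IsProbabilityMeasure μ ∧ μ {ω | IsConfig ω} = 1 ∧
  ∀ F : Finset HexE, ∀ σ τ : Config, IsConfig σ → IsConfig τ →
    (∀ e ∉ F, σ e = τ e) →
    μ (cyl (↑F ∪ edgeNbhd F) σ) *
        ENNReal.ofReal (∏ v ∈ verts F, weight a b c (localConf τ v)) =
      μ (cyl (↑F ∪ edgeNbhd F) τ) *
        ENNReal.ofReal (∏ v ∈ verts F, weight a b c (localConf σ v))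

/-- Translation of edges by `g ∈ ℤ²`. -/
def shiftE (g : ℤ × ℤ) (e : HexE) : HexE := (e.1 + g.1, e.2.1 + g.2, e.2.2)

/-- Induced translation action on configurations. -/
def shiftConfig (g : ℤ × ℤ) (ω : Config) : Config := fun e => ω (shiftE g e)

/-- Translation invariance of a measure on configurations. -/
def TransInvariant (μ : Measure Config) : Prop :=
  ∀ g : ℤ × ℤ, μ.map (shiftConfig g) = μ

/-- Ergodicity: every translation-invariant measurable event has measure `0` or `1`. -/
def IsErgodicTI (μ : Measure Config) : Prop :=
  ∀ A : Set Config, MeasurableSet A → (∀ g, shiftConfig g ⁻¹' A = A) → μ A = 0 ∨ μ A = 1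

/-- The box `B_n(i,j)`. -/
def box (n : ℕ) (i j : ℤ) : Set HexV :=
  {v | |v.1 - i| ≤ (n : ℤ) ∧ |v.2.1 - j| ≤ (n : ℤ)}

/-- Vertices outside `B` adjacent to a vertex of `B`. -/
def outerBoundary (B : Set HexV) : Set HexV := {v | v ∉ B ∧ ∃ w ∈ B, HexAdj v w}

/-- `B_N(i,j)` is an encounter box for `ω` with respect to the infinite `{001}`-cluster `C`. -/
def IsEncounterBoxWrt (ω : Config) (N : ℕ) (i j : ℤ) (C : Set HexV) : Prop :=
  IsCluster ω conf001 C ∧ C.Infinite ∧ box N i j ⊆ C ∧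
  (∀ D, IsCompOf (C \ box (N + 2) i j) D → D.Infinite) ∧
  {D : Set HexV | IsCompOf (C \ box (N + 2) i j) D ∧ D.Infinite}.encard = 3

/-- `B_N(i,j)` is an encounter box for `ω`. -/
def IsEncounterBox (ω : Config) (N : ℕ) (i j : ℤ) : Prop :=
  ∃ C : Set HexV, IsEncounterBoxWrt ω N i j C

/-- A 3-partition of `Y`: an unordered triple of pairwise disjoint nonempty sets with union `Y`. -/
def IsThreePartition {α : Type*} (Y : Set α) (P : Set (Set α)) : Prop :=
  ∃ P₁ P₂ P₃ : Set α, P = {P₁, P₂, P₃} ∧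
    P₁.Nonempty ∧ P₂.Nonempty ∧ P₃.Nonempty ∧
    Disjoint P₁ P₂ ∧ Disjoint P₁ P₃ ∧ Disjoint P₂ P₃ ∧
    P₁ ∪ P₂ ∪ P₃ = Y

/-- Two 3-partitions are compatible if their parts can be ordered so that `Q₂ ∪ Q₃ ⊆ P₁`. -/
def CompatiblePartitions {α : Type*} (P Q : Set (Set α)) : Prop :=
  ∃ P₁ ∈ P, ∃ Q₁ ∈ Q, ∀ R ∈ Q, R ≠ Q₁ → R ⊆ P₁

/-!
Fix a well-order of the ground set, and mark every part of a partition by its least element. A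
partition with `m` parts has `m - 2` marks besides its two least ones. If `P` and `Q` are
compatible, these later marks differ: suppose that all parts of `Q` but `Q₁` lie in `P₁`, and hence
all parts of `P` but `P₁` in `Q₁`. A mark common to `P` and `Q` is the least element of `P₁` or of
`Q₁`. If it is the least element of `P₁`, then only the mark of `Q₁` can come earlier in `Q`, so it
is among the two least marks of `Q`; the other case is symmetric. Since moreover no later mark is
one of the two least points of the ground set, `∑ (|P| - 2) ≤ |Y| - 2`.
-/

section DropLeast

variable {α : Type*} {S T : Set α}

/-- The set `S` with its `k` least elements removed (in a linear order). An element is kept when at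
least `k` elements of `S` precede it, which makes the operation monotone in `S`. -/
def dropLeast [Preorder α] (k : ℕ) (S : Set α) : Set α :=
  {x ∈ S | k ≤ (S ∩ Set.Iio x).ncard}

lemma dropLeast_subset [Preorder α] (k : ℕ) (S : Set α) : dropLeast k S ⊆ S :=
  Set.sep_subset _ _

lemma dropLeast_mono [Preorder α] (k : ℕ) (hT : T.Finite) (h : S ⊆ T) :
    dropLeast k S ⊆ dropLeast k T :=
  fun _ hx ↦ ⟨h hx.1, hx.2.trans <|
    Set.ncard_le_ncard (Set.inter_subset_inter_left _ h) (hT.inter_of_left _)⟩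

lemma strictMonoOn_ncard_inter_Iio [Preorder α] (hS : S.Finite) :
    StrictMonoOn (fun x ↦ (S ∩ Set.Iio x).ncard) S := by
  intro x hx y _ hxy
  refine Set.ncard_lt_ncard (Set.ssubset_iff_exists.2 ⟨?_, x, ⟨hx, hxy⟩, ?_⟩) (hS.inter_of_left _)
  · exact Set.inter_subset_inter_right _ (Set.Iio_subset_Iio hxy.le)
  · exact fun h ↦ lt_irrefl x h.2

lemma bijOn_ncard_inter_Iio [LinearOrder α] (hS : S.Finite) :
    Set.BijOn (fun x ↦ (S ∩ Set.Iio x).ncard) S (Set.Iio S.ncard) := by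
  have hmaps : Set.MapsTo (fun x ↦ (S ∩ Set.Iio x).ncard) S (Set.Iio S.ncard) := fun x hx ↦
    Set.ncard_lt_ncard (Set.ssubset_iff_exists.2
      ⟨Set.inter_subset_left, x, hx, fun h ↦ lt_irrefl x h.2⟩) hS
  have hinj := (strictMonoOn_ncard_inter_Iio hS).injOn
  refine ⟨hmaps, hinj, (Set.eq_of_subset_of_ncard_le hmaps.image_subset ?_).ge⟩
  rw [hinj.ncard_image, Set.ncard_Iio_nat]

lemma ncard_dropLeast [LinearOrder α] (k : ℕ) (hS : S.Finite) :
    (dropLeast k S).ncard = S.ncard - k := by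
  have hrank := bijOn_ncard_inter_Iio hS
  have himage : (fun x ↦ (S ∩ Set.Iio x).ncard) '' dropLeast k S = Set.Ico k S.ncard := by
    ext n
    constructor
    · rintro ⟨x, ⟨hxS, hkx⟩, rfl⟩
      exact ⟨hkx, hrank.mapsTo hxS⟩
    · rintro ⟨hkn, hnS⟩
      obtain ⟨x, hxS, rfl⟩ := hrank.surjOn hnS
      exact ⟨x, ⟨hxS, hkn⟩, rfl⟩
  rw [← (hrank.injOn.mono (dropLeast_subset k S)).ncard_image, himage, Set.ncard_Ico_nat]

end DropLeast

/-- The least elements of the members of a family of sets. -/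
def leastElements {α : Type*} [LE α] (P : Set (Set α)) : Set α :=
  {x | ∃ R ∈ P, IsLeast R x}

section Partition

variable {α : Type*} {Y : Set α} {P Q : Partition Y}

lemma leastElements_subset [LE α] (P : Partition Y) : leastElements (P : Set (Set α)) ⊆ Y :=
  fun _ ⟨_, hR, hx⟩ ↦ P.subset_of_mem hR hx.1

lemma ncard_leastElements [LinearOrder α] [WellFoundedLT α] (P : Partition Y) :
    (leastElements (P : Set (Set α))).ncard = (P : Set (Set α)).ncard := by
  have hleast : ∀ R ∈ (P : Set (Set α)), ∃ x, IsLeast R x := fun R hR ↦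
    (exists_minimal_of_wellFoundedLT (· ∈ R) (P.nonempty_of_mem hR)).imp fun _ ↦
      minimal_iff_isLeast.1
  choose f hf using hleast
  refine .symm <| Set.ncard_congr f (fun R hR ↦ ⟨R, hR, hf R hR⟩) (fun R S hR hS h ↦ ?_) ?_
  · exact P.eq_of_mem_of_mem hR hS (hf R hR).1 (h ▸ (hf S hS).1)
  · rintro x ⟨R, hR, hx⟩
    exact ⟨R, hR, (hf R hR).unique hx⟩

lemma ncard_dropLeast_leastElements [LinearOrder α] [WellFoundedLT α] (k : ℕ) (hY : Y.Finite)
    (P : Partition Y) :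
    (dropLeast k (leastElements (P : Set (Set α)))).ncard = (P : Set (Set α)).ncard - k := by
  rw [ncard_dropLeast k (hY.subset (leastElements_subset P)), ncard_leastElements]

lemma subset_of_forall_ne_subset {P₁ Q₁ : Set α} (hP₁ : P₁ ∈ P)
    (h : ∀ S ∈ Q, S ≠ Q₁ → S ⊆ P₁) : ∀ R ∈ P, R ≠ P₁ → R ⊆ Q₁ := by
  intro R hR hne x hx
  obtain ⟨S, hS, hxS⟩ := Q.mem_iff_exists.1 (P.subset_of_mem hR hx)
  by_cases hSQ : S = Q₁
  · exact hSQ ▸ hxS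
  · exact absurd (P.eq_of_mem_of_mem hR hP₁ hx (h S hS hSQ hxS)) hne

lemma notMem_dropLeast_two_leastElements [PartialOrder α] {𝒬 : Set (Set α)} {P₁ Q₁ : Set α} {x : α}
    (hx : IsLeast P₁ x) (h : ∀ S ∈ 𝒬, S ≠ Q₁ → S ⊆ P₁) : x ∉ dropLeast 2 (leastElements 𝒬) := by
  have hQ₁ : ∀ y ∈ leastElements 𝒬 ∩ Set.Iio x, IsLeast Q₁ y := by
    rintro y ⟨⟨S, hS, hy⟩, hyx⟩
    by_contra hne
    exact (hx.2 (h S hS (fun e ↦ hne (e ▸ hy)) hy.1)).not_gt hyx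
  have hsub : (leastElements 𝒬 ∩ Set.Iio x).Subsingleton := fun y hy z hz ↦
    (hQ₁ y hy).unique (hQ₁ z hz)
  have hone : (leastElements 𝒬 ∩ Set.Iio x).ncard ≤ 1 :=
    (Set.ncard_le_one_iff hsub.finite).2 fun hy hz ↦ hsub hy hz
  exact fun hdrop ↦ (hdrop.2.trans hone).not_gt Nat.one_lt_two

lemma CompatiblePartitions.disjoint_dropLeast_two_leastElements [PartialOrder α]
    (h : CompatiblePartitions (P : Set (Set α)) Q) :
    Disjoint (dropLeast 2 (leastElements (P : Set (Set α))))
      (dropLeast 2 (leastElements (Q : Set (Set α)))) := by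
  obtain ⟨P₁, hP₁, Q₁, hQ₁, hQP⟩ := h
  have hPQ := subset_of_forall_ne_subset hP₁ hQP
  refine Set.disjoint_left.2 fun x hxP hxQ ↦ ?_
  obtain ⟨R, hR, hxR⟩ := hxP.1
  obtain ⟨S, hS, hxS⟩ := hxQ.1
  by_cases hRP : R = P₁
  · exact notMem_dropLeast_two_leastElements (hRP ▸ hxR) hQP hxQ
  · have hSQ : S = Q₁ := Q.eq_of_mem_of_mem hS hQ₁ hxS.1 (hPQ R hR hRP hxR.1)
    exact notMem_dropLeast_two_leastElements (hSQ ▸ hxS) hPQ hxP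

end Partition

namespace IsThreePartition

variable {α : Type*} {Y : Set α} {P : Set (Set α)}

lemma exists_partition (h : IsThreePartition Y P) : ∃ p : Partition Y, (p : Set (Set α)) = P := by
  obtain ⟨P₁, P₂, P₃, rfl, hne₁, hne₂, hne₃, h₁₂, h₁₃, h₂₃, rfl⟩ := h
  refine ⟨⟨{P₁, P₂, P₃}, ?_, ?_, ?_⟩, rfl⟩
  · rw [sSupIndep_iff_pairwiseDisjoint]
    simp [Set.pairwiseDisjoint_insert, h₁₂, h₁₃, h₂₃]
  · simp [hne₁.ne_empty.symm, hne₂.ne_empty.symm, hne₃.ne_empty.symm]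
  · simp [Set.union_assoc]

lemma ncard_eq_three (h : IsThreePartition Y P) : P.ncard = 3 := by
  obtain ⟨P₁, P₂, P₃, rfl, hne₁, hne₂, -, h₁₂, h₁₃, h₂₃, -⟩ := h
  exact Set.ncard_eq_three.2 ⟨P₁, P₂, P₃, h₁₂.ne hne₁.ne_empty, h₁₃.ne hne₁.ne_empty,
    h₂₃.ne hne₂.ne_empty, rfl⟩

end IsThreePartition

/-- Subtraction is truncated: a partition with at most two parts contributes `0`. -/
theorem compatible_partitions_card_le_general {α : Type*} {Y : Set α} (hY : Y.Finite)
    {Ps : Set (Set (Set α))} (hpart : ∀ P ∈ Ps, ∃ p : Partition Y, (p : Set (Set α)) = P)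
    (hcomp : Ps.Pairwise CompatiblePartitions) :
    ∑ᶠ P ∈ Ps, (P.ncard - 2) ≤ Y.ncard - 2 := by
  obtain ⟨_, _⟩ := exists_wellFoundedLT α
  have hfin : Ps.Finite := hY.powerset.powerset.subset fun P hP R hR ↦ by
    obtain ⟨p, rfl⟩ := hpart P hP
    exact p.subset_of_mem hR
  have hcard : ∀ P ∈ Ps, P.ncard - 2 = (dropLeast 2 (leastElements P)).ncard := fun P hP ↦ by
    obtain ⟨p, rfl⟩ := hpart P hP
    exact (ncard_dropLeast_leastElements 2 hY p).symm
  have hsub : ∀ P ∈ Ps, dropLeast 2 (leastElements P) ⊆ dropLeast 2 Y := fun P hP ↦ by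
    obtain ⟨p, rfl⟩ := hpart P hP
    exact dropLeast_mono 2 hY (leastElements_subset p)
  have hdisj : Ps.PairwiseDisjoint fun P ↦ dropLeast 2 (leastElements P) := fun P hP Q hQ hne ↦ by
    have hPQ := hcomp hP hQ hne
    obtain ⟨p, rfl⟩ := hpart P hP
    obtain ⟨q, rfl⟩ := hpart Q hQ
    exact hPQ.disjoint_dropLeast_two_leastElements
  have hYdrop : (dropLeast 2 Y).Finite := hY.subset (dropLeast_subset 2 Y)
  calc ∑ᶠ P ∈ Ps, (P.ncard - 2)
      = ∑ᶠ P ∈ Ps, (dropLeast 2 (leastElements P)).ncard := finsum_mem_congr rfl hcard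
    _ = (⋃ P ∈ Ps, dropLeast 2 (leastElements P)).ncard :=
        (hfin.ncard_biUnion (fun P hP ↦ hYdrop.subset (hsub P hP)) hdisj).symm
    _ ≤ (dropLeast 2 Y).ncard := Set.ncard_le_ncard (Set.iUnion₂_subset hsub) hYdrop
    _ = Y.ncard - 2 := ncard_dropLeast 2 hY

/-- Burton–Keane: a compatible collection of 3-partitions of a finite set `Y`
with at least three elements has at most `|Y| - 2` members. -/
theorem compatible_partitions_card_le {α : Type*} (Y : Set α) (hYfin : Y.Finite)
    (hY : 3 ≤ Y.ncard) (Ps : Set (Set (Set α)))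
    (hpart : ∀ P ∈ Ps, IsThreePartition Y P)
    (hcomp : ∀ P ∈ Ps, ∀ Q ∈ Ps, P ≠ Q → CompatiblePartitions P Q) :
    Ps.ncard ≤ Y.ncard - 2 := by
  have hone : ∀ P ∈ Ps, 1 = P.ncard - 2 := fun P hP ↦ by rw [(hpart P hP).ncard_eq_three]
  rw [← finsum_one, finsum_mem_congr rfl hone]
  exact compatible_partitions_card_le_general hYfin (fun P hP ↦ (hpart P hP).exists_partition) hcomp
end

section
/- For every 1-2 model configuration ω ∈ Ω and every n ≥ 1, there exists a 1-2 model configuration ω′ ∈ Ω such that ω′(e) = ω(e) for every edge e both of whose endpoints lie outside the box B_{n+4}, and every vertex of the box B_n has local configuration {001} in ω′. -/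
open MeasureTheory

/-!
Inside a larger box `B_N(i,j)`, keep only the horizontal edges. The boundary edges are untouched, so
a vertex of the box may now carry all three of its edges, but only an upper vertex at the corner
`(i + N, j + N)` or a lower one at the corner `(i - N, j - N)`. Removing the horizontal edge at such
a vertex repairs it, and does no harm unless its horizontal neighbour carries nothing else. To rule
this out, add at each of the two corners a stub: one b-type edge from the corner cell to the next
cell along the side, followed by one c-type edge into the box. A full vertex can then occur only in
these two cells, where its horizontal neighbour carries a stub edge. The stubs avoid `B_n(i,j)` as
soon as `N ≥ n + 2`.
-/

theorem isConfig_iff_forall_validConf {ω : Config} :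
    IsConfig ω ↔ ∀ v, validConf (localConf ω v) := by
  have card_iff : ∀ f : Fin 3 → Bool,
      (1 ≤ (Finset.univ.filter fun i => f i = true).card ∧
        (Finset.univ.filter fun i => f i = true).card ≤ 2) ↔ validConf f := by
    unfold validConf; decide
  exact forall_congr' fun v => card_iff (localConf ω v)

theorem eq_end1_or_eq_end2_edgesAt (v : HexV) (k : Fin 3) :
    v = end1 (edgesAt v k) ∨ v = end2 (edgesAt v k) := by
  obtain ⟨x, y, t⟩ := v
  cases t <;> fin_cases k <;> simp [edgesAt, end1, end2]

theorem localConf_upper (ω : Config) (x y : ℤ) :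
    localConf ω (x, y, true) = ![ω (x, y, 0), ω (x, y, 1), ω (x, y, 2)] := by
  funext k
  fin_cases k <;> rfl

theorem localConf_lower (ω : Config) (x y : ℤ) :
    localConf ω (x, y, false) = ![ω (x, y, 0), ω (x - 1, y, 1), ω (x, y - 1, 2)] := by
  funext k
  fin_cases k <;> rfl

section Pruning

/-- The neighbour of `v` along its horizontal edge. -/
def horizNbr (v : HexV) : HexV := (v.1, v.2.1, !v.2.2)

/-- All three edges at `v` are present, the local configuration `{111}` forbidden in the
1-2 model. -/
def IsFull (ω : Config) (v : HexV) : Prop := localConf ω v = ![true, true, true]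

instance (ω : Config) (v : HexV) : Decidable (IsFull ω v) :=
  inferInstanceAs (Decidable (localConf ω v = _))

/-- The configuration `ω` without the horizontal edges that have a full endpoint; this is how
full vertices are repaired. -/
def prune (ω : Config) : Config := fun e =>
  if e.2.2 = 0 ∧ (IsFull ω (end1 e) ∨ IsFull ω (end2 e)) then false else ω e

variable {ω : Config}

theorem IsConfig.not_isFull (hω : IsConfig ω) (v : HexV) : ¬ IsFull ω v :=
  (isConfig_iff_forall_validConf.mp hω v).2

theorem prune_of_not_isFull {e : HexE}
    (h : e.2.2 = 0 → ¬ IsFull ω (end1 e) ∧ ¬ IsFull ω (end2 e)) : prune ω e = ω e :=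
  if_neg fun he => he.2.elim (h he.1).1 (h he.1).2

theorem localConf_prune (ω : Config) (v : HexV) :
    localConf (prune ω) v =
      if IsFull ω v ∨ IsFull ω (horizNbr v) then Function.update (localConf ω v) 0 false
      else localConf ω v := by
  obtain ⟨x, y, t⟩ := v
  funext k
  cases t <;> fin_cases k <;>
    simp [localConf, prune, edgesAt, end1, end2, horizNbr, Function.update, or_comm, ite_apply]

theorem isConfig_prune (nonempty : ∀ v, localConf ω v ≠ ![false, false, false])
    (horizNbr_full : ∀ v, IsFull ω (horizNbr v) → localConf ω v ≠ conf001) :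
    IsConfig (prune ω) := by
  have validConf_update : ∀ f : Fin 3 → Bool, f ≠ ![false, false, false] → f ≠ conf001 →
      validConf (Function.update f 0 false) := by
    unfold validConf conf001; decide
  refine isConfig_iff_forall_validConf.mpr fun v => ?_
  rw [localConf_prune]
  split_ifs with h
  · refine validConf_update _ (nonempty v) ?_
    rcases h with hv | hv
    · rw [hv]; decide
    · exact horizNbr_full v hv
  · exact ⟨nonempty v, fun hv => h (Or.inl hv)⟩

end Pruning

section Overwriting

/-- The edges with both endpoints in `B`. -/
def innerEdges (B : Set HexV) : Set HexE := {e | end1 e ∈ B ∧ end2 e ∈ B}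

open Classical in
/-- The configuration that follows `σ` on the edges inside `B` and `ω` on all others. -/
noncomputable def overwrite (B : Set HexV) (σ ω : Config) : Config := fun e =>
  if e ∈ innerEdges B then σ e else ω e

variable {B : Set HexV} {σ ω : Config} {e : HexE} {v : HexV}

theorem overwrite_of_mem (he : e ∈ innerEdges B) : overwrite B σ ω e = σ e :=
  if_pos he

theorem overwrite_of_notMem (he : e ∉ innerEdges B) : overwrite B σ ω e = ω e :=
  if_neg he

theorem localConf_overwrite_of_notMem (hv : v ∉ B) :
    localConf (overwrite B σ ω) v = localConf ω v := by
  funext k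
  refine overwrite_of_notMem fun he => hv ?_
  rcases eq_end1_or_eq_end2_edgesAt v k with h | h <;> rw [h]
  exacts [he.1, he.2]

end Overwriting

section Box

variable {N : ℕ} {i j x y : ℤ} {t : Bool}

theorem mem_box_iff :
    (x, y, t) ∈ box N i j ↔ (i - N ≤ x ∧ x ≤ i + N) ∧ (j - N ≤ y ∧ y ≤ j + N) := by
  simp only [box, Set.mem_ofPred_eq, abs_le]
  omega

theorem box_subset_box {m n : ℕ} (h : m ≤ n) : box m i j ⊆ box n i j :=
  fun _ hv => ⟨hv.1.trans (by exact_mod_cast h), hv.2.trans (by exact_mod_cast h)⟩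

theorem end2_mem_box_iff_of_horizontal {e : HexE} (he : e.2.2 = 0) :
    end2 e ∈ box N i j ↔ end1 e ∈ box N i j := by
  simp [end1, end2, he, box]

end Box

section StubbedBox

/-- The configuration to be put inside `B_N(i,j)`: all horizontal edges, and at each of the corners
`(i - N, j - N)` and `(i + N, j + N)` a stub made of a b-type and a c-type edge. -/
def stubPattern (N : ℕ) (i j : ℤ) : Config := fun e =>
  decide (e.2.2 = 0 ∨ e ∈ ({(i - N, j - N, 1), (i - N + 1, j - N, 2),
    (i + N - 1, j + N, 1), (i + N - 1, j + N - 1, 2)} : Finset HexE))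

/-- The configuration `ω` with the inside of `B_N(i,j)` replaced by `stubPattern N i j`. -/
noncomputable def stubbed (N : ℕ) (i j : ℤ) (ω : Config) : Config :=
  overwrite (box N i j) (stubPattern N i j) ω

variable {N : ℕ} {i j x y : ℤ} {t : Bool} {ω : Config} {v : HexV} {e : HexE}

theorem localConf_stubbed_of_notMem (hv : v ∉ box N i j) :
    localConf (stubbed N i j ω) v = localConf ω v :=
  localConf_overwrite_of_notMem hv

theorem not_isFull_stubbed_of_notMem (hω : IsConfig ω) (hv : v ∉ box N i j) :
    ¬ IsFull (stubbed N i j ω) v := by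
  rw [IsFull, localConf_stubbed_of_notMem hv]
  exact hω.not_isFull v

theorem stubbed_a (h : (x, y, t) ∈ box N i j) : stubbed N i j ω (x, y, 0) = true := by
  rw [stubbed, overwrite_of_mem ⟨h, h⟩]
  simp [stubPattern]

theorem stubbed_b_eq_true_iff (hx : i - N ≤ x ∧ x < i + N) (hy : j - N ≤ y ∧ y ≤ j + N) :
    stubbed N i j ω (x, y, 1) = true ↔
      (x = i - N ∧ y = j - N) ∨ (x = i + N - 1 ∧ y = j + N) := by
  have mem₁ : (x, y, true) ∈ box N i j := mem_box_iff.mpr (by omega)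
  have mem₂ : (x + 1, y, false) ∈ box N i j := mem_box_iff.mpr (by omega)
  rw [stubbed, overwrite_of_mem ⟨mem₁, mem₂⟩]
  simp [stubPattern]

theorem stubbed_c_eq_true_iff (hx : i - N ≤ x ∧ x ≤ i + N) (hy : j - N ≤ y ∧ y < j + N) :
    stubbed N i j ω (x, y, 2) = true ↔
      (x = i - N + 1 ∧ y = j - N) ∨ (x = i + N - 1 ∧ y = j + N - 1) := by
  have mem₁ : (x, y, true) ∈ box N i j := mem_box_iff.mpr (by omega)
  have mem₂ : (x, y + 1, false) ∈ box N i j := mem_box_iff.mpr (by omega)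
  rw [stubbed, overwrite_of_mem ⟨mem₁, mem₂⟩]
  simp [stubPattern]

theorem localConf_stubbed_ne_empty (hω : IsConfig ω) (v : HexV) :
    localConf (stubbed N i j ω) v ≠ ![false, false, false] := by
  by_cases hv : v ∈ box N i j
  · obtain ⟨x, y, t⟩ := v
    intro h
    have ha : stubbed N i j ω (x, y, 0) = false := by
      cases t <;> exact congrFun h 0
    exact absurd (ha.symm.trans (stubbed_a hv)) (by decide)
  · rw [localConf_stubbed_of_notMem hv]
    exact (isConfig_iff_forall_validConf.mp hω v).1

theorem near_top_corner_of_isFull (hv : (x, y, true) ∈ box N i j)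
    (hfull : IsFull (stubbed N i j ω) (x, y, true)) :
    (x = i + N - 1 ∨ x = i + N) ∧ y = j + N := by
  have hxy := mem_box_iff.mp hv
  have b_stub (hx : x < i + N) : (x = i - N ∧ y = j - N) ∨ (x = i + N - 1 ∧ y = j + N) :=
    (stubbed_b_eq_true_iff (by omega) (by omega)).mp (congrFun hfull 1)
  have c_stub (hy : y < j + N) :
      (x = i - N + 1 ∧ y = j - N) ∨ (x = i + N - 1 ∧ y = j + N - 1) :=
    (stubbed_c_eq_true_iff (by omega) (by omega)).mp (congrFun hfull 2)
  omega

theorem near_bottom_corner_of_isFull (hv : (x, y, false) ∈ box N i j)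
    (hfull : IsFull (stubbed N i j ω) (x, y, false)) :
    (x = i - N ∨ x = i - N + 1) ∧ y = j - N := by
  have hxy := mem_box_iff.mp hv
  have b_stub (hx : i - N < x) : (x - 1 = i - N ∧ y = j - N) ∨ (x - 1 = i + N - 1 ∧ y = j + N) :=
    (stubbed_b_eq_true_iff (by omega) (by omega)).mp (congrFun hfull 1)
  have c_stub (hy : j - N < y) :
      (x = i - N + 1 ∧ y - 1 = j - N) ∨ (x = i + N - 1 ∧ y - 1 = j + N - 1) :=
    (stubbed_c_eq_true_iff (by omega) (by omega)).mp (congrFun hfull 2)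
  omega

theorem localConf_stubbed_near_top_corner_ne_conf001 (hN : 1 ≤ N)
    (hx : x = i + N - 1 ∨ x = i + N) :
    localConf (stubbed N i j ω) (x, j + N, false) ≠ conf001 := by
  intro h
  rcases hx with hx | hx
  · have c_present : stubbed N i j ω (x, j + N - 1, 2) = true :=
      (stubbed_c_eq_true_iff (by omega) (by omega)).mpr (by omega)
    exact absurd (c_present.symm.trans (congrFun h 2)) (by decide)
  · have b_present : stubbed N i j ω (x - 1, j + N, 1) = true :=
      (stubbed_b_eq_true_iff (by omega) (by omega)).mpr (by omega)
    exact absurd (b_present.symm.trans (congrFun h 1)) (by decide)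

theorem localConf_stubbed_near_bottom_corner_ne_conf001 (hN : 1 ≤ N)
    (hx : x = i - N ∨ x = i - N + 1) :
    localConf (stubbed N i j ω) (x, j - N, true) ≠ conf001 := by
  intro h
  rcases hx with hx | hx
  · have b_present : stubbed N i j ω (x, j - N, 1) = true :=
      (stubbed_b_eq_true_iff (by omega) (by omega)).mpr (by omega)
    exact absurd (b_present.symm.trans (congrFun h 1)) (by decide)
  · have c_present : stubbed N i j ω (x, j - N, 2) = true :=
      (stubbed_c_eq_true_iff (by omega) (by omega)).mpr (by omega)
    exact absurd (c_present.symm.trans (congrFun h 2)) (by decide)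

theorem localConf_stubbed_ne_conf001_of_isFull_horizNbr (hω : IsConfig ω) (hN : 1 ≤ N) (v : HexV)
    (hfull : IsFull (stubbed N i j ω) (horizNbr v)) :
    localConf (stubbed N i j ω) v ≠ conf001 := by
  by_cases hv : horizNbr v ∈ box N i j
  · obtain ⟨x, y, _ | _⟩ := v
    · obtain ⟨hx, rfl⟩ := near_top_corner_of_isFull hv hfull
      exact localConf_stubbed_near_top_corner_ne_conf001 hN hx
    · obtain ⟨hx, rfl⟩ := near_bottom_corner_of_isFull hv hfull
      exact localConf_stubbed_near_bottom_corner_ne_conf001 hN hx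
  · exact absurd hfull (not_isFull_stubbed_of_notMem hω hv)

theorem isConfig_prune_stubbed (hω : IsConfig ω) (hN : 1 ≤ N) :
    IsConfig (prune (stubbed N i j ω)) :=
  isConfig_prune (localConf_stubbed_ne_empty hω)
    (localConf_stubbed_ne_conf001_of_isFull_horizNbr hω hN)

theorem prune_stubbed_of_notMem (hω : IsConfig ω) (he : e ∉ innerEdges (box N i j)) :
    prune (stubbed N i j ω) e = ω e := by
  have horizontal (h : e.2.2 = 0) : end1 e ∉ box N i j ∧ end2 e ∉ box N i j := by
    have ends_iff : end2 e ∈ box N i j ↔ end1 e ∈ box N i j := end2_mem_box_iff_of_horizontal h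
    exact ⟨fun h₁ => he ⟨h₁, ends_iff.mpr h₁⟩, fun h₂ => he ⟨ends_iff.mp h₂, h₂⟩⟩
  rw [prune_of_not_isFull fun h =>
    (horizontal h).imp (not_isFull_stubbed_of_notMem hω) (not_isFull_stubbed_of_notMem hω)]
  exact overwrite_of_notMem he

theorem localConf_stubbed_eq_conf001 {n : ℕ} (hnN : n + 2 ≤ N) (hv : v ∈ box n i j) :
    localConf (stubbed N i j ω) v = conf001 := by
  obtain ⟨x, y, t⟩ := v
  have hxy := mem_box_iff.mp hv
  have a_present : stubbed N i j ω (x, y, 0) = true :=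
    stubbed_a (box_subset_box (by omega) hv)
  have b_absent (x' : ℤ) (hx' : x - 1 ≤ x' ∧ x' ≤ x) : stubbed N i j ω (x', y, 1) = false := by
    rw [← Bool.not_eq_true, stubbed_b_eq_true_iff (by omega) (by omega)]
    omega
  have c_absent (y' : ℤ) (hy' : y - 1 ≤ y' ∧ y' ≤ y) : stubbed N i j ω (x, y', 2) = false := by
    rw [← Bool.not_eq_true, stubbed_c_eq_true_iff (by omega) (by omega)]
    omega
  cases t
  · rw [localConf_lower, a_present, b_absent _ (by omega), c_absent _ (by omega), conf001]
  · rw [localConf_upper, a_present, b_absent _ (by omega), c_absent _ (by omega), conf001]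

theorem localConf_prune_stubbed_eq_conf001 {n : ℕ} (hnN : n + 2 ≤ N) (hv : v ∈ box n i j) :
    localConf (prune (stubbed N i j ω)) v = conf001 := by
  have not_isFull : ∀ w ∈ box n i j, ¬ IsFull (stubbed N i j ω) w := fun w hw => by
    rw [IsFull, localConf_stubbed_eq_conf001 hnN hw]
    decide
  rw [localConf_prune, if_neg (not_or.mpr ⟨not_isFull v hv, not_isFull (horizNbr v) hv⟩)]
  exact localConf_stubbed_eq_conf001 hnN hv

end StubbedBox

theorem fill_box_with_001_general {ω : Config} (hω : IsConfig ω) (n : ℕ) (i j : ℤ) :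
    ∃ ω' : Config, IsConfig ω' ∧
      (∀ e ∉ innerEdges (box (n + 2) i j), ω' e = ω e) ∧
      (∀ v ∈ box n i j, localConf ω' v = conf001) :=
  ⟨prune (stubbed (n + 2) i j ω), isConfig_prune_stubbed hω (by omega),
    fun _ he => prune_stubbed_of_notMem hω he,
    fun _ hv => localConf_prune_stubbed_eq_conf001 le_rfl hv⟩

/-- any 1-2 model configuration can be modified, changing only edges with an
endpoint in `B_{n+4}`, into a 1-2 model configuration in which every vertex of `B_n` has
local configuration `{001}`. -/
theorem fill_box_with_001
    (ω : Config) (hω : IsConfig ω) (n : ℕ) (hn : 1 ≤ n) :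
    ∃ ω' : Config, IsConfig ω' ∧
      (∀ e : HexE, end1 e ∉ box (n + 4) 0 0 → end2 e ∉ box (n + 4) 0 0 → ω' e = ω e) ∧
      (∀ v ∈ box n 0 0, localConf ω' v = conf001) := by
  obtain ⟨ω', config, agree, filled⟩ := fill_box_with_001_general hω n 0 0
  exact ⟨ω', config, fun e h₁ _ => agree e fun he => h₁ (box_subset_box (by omega) he.1), filled⟩
end
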